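/- Let ν ∈ (0,1) and u₀ ∈ (0,π), and let g be the 2π-periodic extension of u ↦ |u|^{ν−1} sgn(u) from [−π,π). Then there exists a function F ∈ C^∞((−u₀,u₀)) such that for every u ∈ (−u₀,u₀) \ {0}, ℋ(g)(u) = tan(πν/2) · |u|^{ν−1} + F(u). -/

import Mathlib

open Real MeasureTheory Filter Set Asymptotics

/-- Principal value (at `u`) of the integral of `g` over `(-π, π)`. -/
noncomputable def pvInt (g : ℝ → ℝ) (u : ℝ) : ℝ :=
  limUnder (nhdsWithin (0:ℝ) (Set.Ioi 0))
    (fun ε : ℝ => ∫ x in {x : ℝ | x ∈ Set.Ioo (-π) π ∧ ε < |x - u|}, g x)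

/-- Periodic Hilbert transform of a `2π`-periodic function:
`ℋ(f)(u) = (1/π) Σ_{n ∈ ℤ} p.v.∫_{-π}^{π} f(x)/(x - u + 2πn) dx`. -/
noncomputable def periodicHilbert (f : ℝ → ℝ) (u : ℝ) : ℝ :=
  (1/π) * ∑' n : ℤ, pvInt (fun x => f x / (x - u + 2*π*(n : ℝ))) u

/-- The operator `K_∞ = -ℋ ∂ᵤ` acting via the a.e. derivative. -/
noncomputable def Kinf (f : ℝ → ℝ) (u : ℝ) : ℝ := - periodicHilbert (deriv f) u

/-- The `2π`-periodic extension of `g : [-π, π) → ℝ`. -/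
noncomputable def perExt (g : ℝ → ℝ) (x : ℝ) : ℝ :=
  g (x - 2*π*(⌊(x + π)/(2*π)⌋ : ℝ))


lemma HasSum.congr_aux {f g : ℕ → ℝ} {a : ℝ} (h : HasSum f a) (e : ∀ k, g k = f k) :
    HasSum g a := by
  have : g = f := funext e
  rw [this]; exact h

lemma aux_cot_hasSum (x : ℝ) (hx : x ∈ Set.Ioo (0:ℝ) 1) :
    HasSum (fun n : ℕ => 1 / (x - (n + 1)) + 1 / (x + (n + 1))) (π * Real.cot (π * x) - 1 / x) := by
  have hz : (x : ℂ) ∈ Complex.integerComplement := by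
    rw [Complex.mem_integerComplement_iff]
    rintro ⟨n, hn⟩
    have hn' : (n : ℝ) = x := by exact_mod_cast hn
    have h0 : (0:ℝ) < n := by rw [hn']; exact hx.1
    have h1 : (n:ℝ) < 1 := by rw [hn']; exact hx.2
    have h0' : 0 < n := by exact_mod_cast h0
    have h1' : n < 1 := by exact_mod_cast h1
    omega
  have hs := (summable_cotTerm hz).hasSum
  have ht := cot_series_rep' hz
  have h2 : (∑' n : ℕ, cotTerm (x:ℂ) n) = π * Complex.cot (π * x) - 1 / x := by
    rw [ht]
  rw [h2] at hs
  rw [← Complex.hasSum_ofReal]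
  convert hs using 1
  · funext n
    simp [cotTerm]
  · push_cast
    rfl

lemma aux_tan_hasSum (ν : ℝ) (hν : ν ∈ Set.Ioo (0:ℝ) 1) :
    HasSum (fun k : ℕ => 2 * (1 / (2 * (k:ℝ) + 1 - ν) - 1 / (2 * (k:ℝ) + 1 + ν)))
      (π * Real.tan (π * ν / 2)) := by
  obtain ⟨h0, h1⟩ := hν
  have hA := aux_cot_hasSum ν ⟨h0, h1⟩
  have hB := aux_cot_hasSum (ν/2) ⟨by linarith, by linarith⟩
  set b : ℕ → ℝ := fun n : ℕ => 1 / (ν - (n + 1)) + 1 / (ν + (n + 1)) with hb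
  have hev : Summable (fun k : ℕ => b (2 * k)) :=
    hA.summable.comp_injective (fun a c h => by simpa using h)
  have hod : HasSum (fun k : ℕ => b (2 * k + 1)) (1/2 * (π * Real.cot (π * (ν/2)) - 1 / (ν/2))) := by
    refine (hB.mul_left (1/2)).congr_aux ?_
    intro k
    simp only [hb]
    push_cast
    have e1 : ν - (2 * (k:ℝ) + 1 + 1) ≠ 0 := by
      have : (0:ℝ) ≤ k := Nat.cast_nonneg k
      intro h; linarith
    have e2 : ν + (2 * (k:ℝ) + 1 + 1) ≠ 0 := by positivity
    have e3 : ν/2 - ((k:ℝ) + 1) ≠ 0 := by intro h; apply e1; linarith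
    have e4 : ν/2 + ((k:ℝ) + 1) ≠ 0 := by positivity
    rw [show ν - (2 * (k:ℝ) + 1 + 1) = 2 * (ν/2 - ((k:ℝ) + 1)) by ring,
      show ν + (2 * (k:ℝ) + 1 + 1) = 2 * (ν/2 + ((k:ℝ) + 1)) by ring]
    field_simp
  have hsum := (hev.hasSum.even_add_odd hod).unique hA
  have hval : ∑' k : ℕ, b (2*k) = π * Real.cot (π * ν) - π / 2 * Real.cot (π * (ν/2)) := by
    have : (1:ℝ) / (ν/2) = 2 / ν := by field_simp
    rw [this] at hsum
    have e : (2:ℝ)/ν = 2 * (1/ν) := by ring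
    rw [e] at hsum
    linarith
  have h := hev.hasSum.mul_left (-2)
  rw [hval] at h
  suffices hfin : -2 * (π * Real.cot (π * ν) - π / 2 * Real.cot (π * (ν/2))) = π * Real.tan (π * ν / 2) by
    rw [hfin] at h
    refine h.congr_aux ?_
    intro k
    simp only [hb]
    push_cast
    rw [show ν - (2 * (k:ℝ) + 1) = -(2 * (k:ℝ) + 1 - ν) by ring]
    simp only [one_div, inv_neg]
    rw [add_comm ν]
    ring
  · have hs : Real.sin (π * (ν/2)) ≠ 0 := by
      apply ne_of_gt
      apply Real.sin_pos_of_pos_of_lt_pi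
      · have := Real.pi_pos; positivity
      · nlinarith [Real.pi_pos]
    have hc : Real.cos (π * (ν/2)) ≠ 0 := by
      apply ne_of_gt
      apply Real.cos_pos_of_mem_Ioo
      constructor <;> nlinarith [Real.pi_pos]
    rw [show π * ν / 2 = π * (ν/2) by ring, show π * ν = 2 * (π * (ν/2)) by ring]
    rw [Real.cot_eq_cos_div_sin, Real.cot_eq_cos_div_sin, Real.tan_eq_sin_div_cos,
      Real.cos_two_mul, Real.sin_two_mul]
    have := Real.sin_sq_add_cos_sq (π * (ν/2))
    generalize Real.sin (π * (ν/2)) = S at *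
    generalize Real.cos (π * (ν/2)) = C at *
    field_simp
    linear_combination (-1) * this

/-- The density after symmetrization and inversion. -/
noncomputable def auxM (ν s : ℝ) : ℝ := 2 * (s ^ (-ν) - s ^ ν) / (1 - s ^ 2)

lemma auxM_bound (ν : ℝ) (hν : ν ∈ Set.Ioo (0:ℝ) 1) (s : ℝ) (hs : s ∈ Set.Ioo (0:ℝ) 1) :
    ‖auxM ν s‖ ≤ 2 * s ^ (-ν) := by
  obtain ⟨h0, h1⟩ := hν
  obtain ⟨s0, s1⟩ := hs
  have hp : 0 < 1 - s^2 := by nlinarith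
  have h2 : s ^ ν = s ^ (-ν) * s ^ (2*ν) := by
    rw [← Real.rpow_add s0]; congr 1; ring
  have h3 : s ^ (2:ℕ) ≤ s ^ (2*ν) := by
    rw [← Real.rpow_natCast]
    apply Real.rpow_le_rpow_of_exponent_ge s0 s1.le
    push_cast; linarith
  have h4 : s ^ (2*ν) ≤ 1 := Real.rpow_le_one s0.le s1.le (by linarith)
  have h5 : 0 < s ^ (-ν) := Real.rpow_pos_of_pos s0 _
  unfold auxM
  rw [h2, Real.norm_eq_abs, abs_of_nonneg]
  · rw [div_le_iff₀ hp]
    nlinarith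
  · apply div_nonneg _ hp.le
    nlinarith

lemma auxM_intervalIntegrable (ν : ℝ) (hν : ν ∈ Set.Ioo (0:ℝ) 1) :
    IntervalIntegrable (auxM ν) volume 0 1 := by
  rw [intervalIntegrable_iff_integrableOn_Ioo_of_le zero_le_one]
  have h : IntegrableOn (fun s : ℝ => 2 * s ^ (-ν)) (Ioo 0 1) := by
    rw [← intervalIntegrable_iff_integrableOn_Ioo_of_le zero_le_one]
    exact (intervalIntegral.intervalIntegrable_rpow' (by linarith [hν.2])).const_mul 2
  refine Integrable.mono' h ?_ ?_
  · have : Measurable (auxM ν) := by unfold auxM; fun_prop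
    exact this.aestronglyMeasurable
  · rw [ae_restrict_iff' measurableSet_Ioo]
    exact Eventually.of_forall (fun s hs => auxM_bound ν hν s hs)

lemma auxM_integral (ν : ℝ) (hν : ν ∈ Set.Ioo (0:ℝ) 1) :
    ∫ s in (0:ℝ)..1, auxM ν s = π * Real.tan (π * ν / 2) := by
  have hs := aux_tan_hasSum ν hν
  obtain ⟨h0, h1⟩ := hν
  set F : ℕ → ℝ → ℝ := fun k s => 2 * (s ^ (2 * (k:ℝ) - ν) - s ^ (2 * (k:ℝ) + ν)) with hF
  have hk : ∀ k : ℕ, (0:ℝ) ≤ k := fun k => Nat.cast_nonneg k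
  have hii1 : ∀ k : ℕ, IntervalIntegrable (fun s : ℝ => s ^ (2 * (k:ℝ) - ν)) volume 0 1 :=
    fun k => intervalIntegral.intervalIntegrable_rpow' (by linarith [hk k])
  have hii2 : ∀ k : ℕ, IntervalIntegrable (fun s : ℝ => s ^ (2 * (k:ℝ) + ν)) volume 0 1 :=
    fun k => intervalIntegral.intervalIntegrable_rpow' (by linarith [hk k])
  have hint : ∀ k, IntegrableOn (F k) (Ioo 0 1) := by
    intro k
    rw [← intervalIntegrable_iff_integrableOn_Ioo_of_le zero_le_one]
    exact ((hii1 k).sub (hii2 k)).const_mul 2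
  have hval : ∀ k, ∫ s in Ioo (0:ℝ) 1, F k s =
      2 * (1 / (2 * (k:ℝ) + 1 - ν) - 1 / (2 * (k:ℝ) + 1 + ν)) := by
    intro k
    rw [← integral_Ioc_eq_integral_Ioo, ← intervalIntegral.integral_of_le zero_le_one]
    simp only [hF]
    rw [intervalIntegral.integral_const_mul, intervalIntegral.integral_sub (hii1 k) (hii2 k),
      integral_rpow (Or.inl (by linarith [hk k])), integral_rpow (Or.inl (by linarith [hk k]))]
    rw [Real.one_rpow, Real.one_rpow, Real.zero_rpow (by linarith [hk k]),
      Real.zero_rpow (by linarith [hk k])]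
    congr 2 <;> congr 1 <;> ring
  have hnn : ∀ k, ∀ s ∈ Ioo (0:ℝ) 1, 0 ≤ F k s := by
    intro k s hs
    have := Real.rpow_le_rpow_of_exponent_ge hs.1 hs.2.le
      (show 2 * (k:ℝ) - ν ≤ 2 * (k:ℝ) + ν by linarith)
    simp only [hF]; linarith
  have hnorm : ∀ k, ∫ s in Ioo (0:ℝ) 1, ‖F k s‖ =
      2 * (1 / (2 * (k:ℝ) + 1 - ν) - 1 / (2 * (k:ℝ) + 1 + ν)) := by
    intro k
    rw [← hval k]
    apply setIntegral_congr_fun measurableSet_Ioo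
    intro s hs
    exact Real.norm_of_nonneg (hnn k s hs)
  have key := hasSum_integral_of_summable_integral_norm (μ := volume.restrict (Ioo (0:ℝ) 1))
    (F := F) hint (by simp_rw [hnorm]; exact hs.summable)
  simp_rw [hval] at key
  rw [← hs.unique key |>.symm, intervalIntegral.integral_of_le zero_le_one,
    integral_Ioc_eq_integral_Ioo]
  apply setIntegral_congr_fun measurableSet_Ioo
  intro s hs
  have hsq : s ^ 2 < 1 := by nlinarith [hs.1, hs.2]
  have hg := (hasSum_geometric_of_lt_one (sq_nonneg s) hsq).mul_left (2 * (s ^ (-ν) - s ^ ν))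
  have hFk : ∀ k : ℕ, F k s = 2 * (s ^ (-ν) - s ^ ν) * (s ^ 2) ^ k := by
    intro k
    simp only [hF]
    rw [sub_eq_add_neg (2 * (k:ℝ)) ν, Real.rpow_add hs.1, Real.rpow_add hs.1, ← pow_mul,
      ← Real.rpow_natCast s (2 * k)]
    push_cast
    ring
  simp only [hFk]
  rw [hg.tsum_eq]
  rfl

lemma aux_holo (s : Set ℝ) (hs : MeasurableSet s) (w : ℝ → ℝ) (hw : IntegrableOn w s)
    (A B : ℝ → ℝ) (hA : Measurable A) (hB : Measurable B) (c : ℂ) (R m b : ℝ) (hm : 0 < m)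
    (hBb : ∀ x ∈ s, |B x| ≤ b)
    (hden : ∀ z ∈ Metric.ball (0:ℂ) R, ∀ x ∈ s, m ≤ ‖(A x : ℂ) - (B x : ℂ) * (z - c) ^ 2‖) :
    DifferentiableOn ℂ (fun z : ℂ => ∫ x in s, (w x : ℂ) / ((A x : ℂ) - (B x : ℂ) * (z - c) ^ 2))
      (Metric.ball (0:ℂ) R) := by
  intro z₀ hz₀
  have hwm : AEStronglyMeasurable (fun x => (w x : ℂ)) (volume.restrict s) :=
    hw.ofReal.aestronglyMeasurable
  have hden0 : ∀ z ∈ Metric.ball (0:ℂ) R, ∀ x ∈ s, (A x : ℂ) - (B x : ℂ) * (z - c) ^ 2 ≠ 0 := by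
    intro z hz x hx h
    have := hden z hz x hx
    rw [h, norm_zero] at this
    linarith
  have hmeas : ∀ z : ℂ, AEStronglyMeasurable
      (fun x => (w x : ℂ) / ((A x : ℂ) - (B x : ℂ) * (z - c) ^ 2)) (volume.restrict s) := by
    intro z
    apply AEMeasurable.aestronglyMeasurable
    apply AEMeasurable.div hwm.aemeasurable
    fun_prop
  have key := hasDerivAt_integral_of_dominated_loc_of_deriv_le (μ := volume.restrict s)
    (F := fun (z : ℂ) (x : ℝ) => (w x : ℂ) / ((A x : ℂ) - (B x : ℂ) * (z - c) ^ 2))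
    (F' := fun (z : ℂ) (x : ℝ) => (w x : ℂ) * ((B x : ℂ) * (2 * (z - c))) /
      ((A x : ℂ) - (B x : ℂ) * (z - c) ^ 2) ^ 2)
    (x₀ := z₀) (s := Metric.ball (0:ℂ) R)
    (bound := fun x => ‖w x‖ * (b * (2 * (R + ‖c‖)) / m ^ 2))
    (Metric.isOpen_ball.mem_nhds hz₀) (Eventually.of_forall hmeas) ?_ ?_ ?_ ?_ ?_
  · exact key.2.differentiableAt.differentiableWithinAt
  · refine Integrable.mono' (hw.norm.mul_const (1 / m)) (hmeas z₀) ?_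
    rw [ae_restrict_iff' hs]
    refine Eventually.of_forall (fun x hx => ?_)
    rw [norm_div, Complex.norm_real, div_eq_mul_one_div]
    have := hden z₀ hz₀ x hx
    gcongr
  · apply AEMeasurable.aestronglyMeasurable
    apply AEMeasurable.div
    · apply AEMeasurable.mul hwm.aemeasurable
      fun_prop
    · fun_prop
  · rw [ae_restrict_iff' hs]
    refine Eventually.of_forall (fun x hx z hz => ?_)
    have h1 := hden z hz x hx
    have h2 := hBb x hx
    have h3 : ‖z - c‖ ≤ R + ‖c‖ := by
      have := norm_sub_le z c
      have : ‖z‖ < R := by simpa using hz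
      linarith
    rw [norm_div, norm_mul, norm_mul, norm_mul, Complex.norm_real, Complex.norm_real, norm_pow,
      mul_div_assoc, Real.norm_eq_abs (B x)]
    have h4 : ‖(2:ℂ)‖ = 2 := by simp
    rw [h4]
    have h5 : 0 ≤ b := (abs_nonneg _).trans h2
    have h6 : 0 ≤ R + ‖c‖ := (norm_nonneg _).trans h3
    have h7 : 0 ≤ b * (2 * (R + ‖c‖)) := by positivity
    gcongr
  · exact hw.norm.mul_const _
  · rw [ae_restrict_iff' hs]
    refine Eventually.of_forall (fun x hx z hz => ?_)
    have h1 := hden0 z hz x hx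
    have hd : HasDerivAt (fun z : ℂ => (A x : ℂ) - (B x : ℂ) * (z - c) ^ 2)
        (-((B x : ℂ) * (2 * (z - c)))) z := by
      have := ((((hasDerivAt_id z).sub_const c).pow 2).const_mul (B x : ℂ)).const_sub (A x : ℂ)
      simpa using this
    have := (hasDerivAt_const z (w x : ℂ)).div hd h1
    refine this.congr_deriv ?_
    ring

lemma perExt_eq_aux (f : ℝ → ℝ) (x : ℝ) (hx : x ∈ Ioo (-π) π) : perExt f x = f x := by
  have hp := Real.pi_pos
  have : ⌊(x + π)/(2*π)⌋ = 0 := by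
    rw [Int.floor_eq_zero_iff]
    constructor
    · apply div_nonneg <;> linarith [hx.1]
    · rw [div_lt_one (by linarith)]; linarith [hx.2]
  unfold perExt
  rw [this]; simp

lemma pvInt_regular (f : ℝ → ℝ) (u : ℝ) (hf : IntegrableOn f (Ioo (-π) π)) :
    pvInt f u = ∫ x in Ioo (-π) π, f x := by
  unfold pvInt
  apply Tendsto.limUnder_eq
  have hmeas : ∀ ε : ℝ, MeasurableSet {x : ℝ | x ∈ Set.Ioo (-π) π ∧ ε < |x - u|} := by
    intro ε
    have h1 : MeasurableSet {x : ℝ | ε < |x - u|} := by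
      apply measurableSet_lt <;> fun_prop
    exact measurableSet_Ioo.inter h1
  simp_rw [← integral_indicator (hmeas _), ← integral_indicator measurableSet_Ioo]
  rw [← integrable_indicator_iff measurableSet_Ioo] at hf
  refine tendsto_integral_filter_of_dominated_convergence (fun x => ‖(Ioo (-π) π).indicator f x‖)
    ?_ ?_ hf.norm ?_
  · refine Eventually.of_forall (fun ε => ?_)
    have : {x : ℝ | x ∈ Set.Ioo (-π) π ∧ ε < |x - u|}.indicator f =
      {x : ℝ | ε < |x - u|}.indicator ((Ioo (-π) π).indicator f) := by
      rw [Set.indicator_indicator, Set.inter_comm]; rfl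
    rw [this]
    apply hf.aestronglyMeasurable.indicator
    apply measurableSet_lt <;> fun_prop
  · refine Eventually.of_forall (fun ε => Eventually.of_forall (fun x => ?_))
    apply norm_indicator_le_of_subset
    intro y hy
    exact hy.1
  · have h0 : ∀ᵐ x : ℝ, x ≠ u := by
      simp [ae_iff]
    filter_upwards [h0] with x hx
    have hpos : 0 < |x - u| := abs_pos.mpr (sub_ne_zero.mpr hx)
    apply tendsto_const_nhds.congr'
    have : ∀ᶠ ε : ℝ in nhdsWithin 0 (Ioi 0), ε < |x - u| :=
      (eventually_lt_nhds hpos).filter_mono nhdsWithin_le_nhds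
    filter_upwards [this] with ε hε
    by_cases hxm : x ∈ Ioo (-π) π
    · have hxm' : x ∈ {x : ℝ | x ∈ Set.Ioo (-π) π ∧ ε < |x - u|} := ⟨hxm, hε⟩
      rw [Set.indicator_of_mem hxm, Set.indicator_of_mem hxm']
    · rw [Set.indicator_of_notMem hxm, Set.indicator_of_notMem (fun h => hxm h.1)]

/-- The basic odd density. -/
noncomputable def auxG (ν x : ℝ) : ℝ := |x| ^ (ν - 1) * Real.sign x

lemma auxG_pos (ν x : ℝ) (hx : 0 < x) : auxG ν x = x ^ (ν - 1) := by
  simp [auxG, abs_of_pos hx, Real.sign_of_pos hx]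

lemma auxG_neg (ν x : ℝ) : auxG ν (-x) = - auxG ν x := by
  simp [auxG, Real.sign_neg]

lemma auxG_intervalIntegrable (ν : ℝ) (hν : ν ∈ Set.Ioo (0:ℝ) 1) :
    IntervalIntegrable (auxG ν) volume (-π) π := by
  have h1 : IntervalIntegrable (auxG ν) volume 0 π := by
    have := intervalIntegral.intervalIntegrable_rpow' (a := 0) (b := π) (r := ν - 1)
      (by linarith [hν.1])
    refine this.congr ?_
    intro x hx
    rw [uIoc_of_le Real.pi_pos.le] at hx
    exact (auxG_pos ν x hx.1).symm
  have h2 : IntervalIntegrable (auxG ν) volume (-π) 0 := by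
    rw [IntervalIntegrable.iff_comp_neg]
    simp only [auxG_neg, neg_neg, neg_zero]
    exact h1.symm.neg
  exact h2.trans h1

lemma auxG_integrableOn (ν : ℝ) (hν : ν ∈ Set.Ioo (0:ℝ) 1) :
    IntegrableOn (auxG ν) (Ioo (-π) π) := by
  rw [← intervalIntegrable_iff_integrableOn_Ioo_of_le (by linarith [Real.pi_pos])]
  exact auxG_intervalIntegrable ν hν

lemma auxG_div_integrableOn (ν : ℝ) (hν : ν ∈ Set.Ioo (0:ℝ) 1) (c m : ℝ) (hm : 0 < m)
    (s : Set ℝ) (hs : MeasurableSet s) (hsub : s ⊆ Ioo (-π) π) (hc : ∀ x ∈ s, m ≤ |x - c|) :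
    IntegrableOn (fun x => auxG ν x / (x - c)) s := by
  have h := (auxG_integrableOn ν hν).mono_set hsub
  refine Integrable.mono' (h.norm.mul_const (1/m)) ?_ ?_
  · apply AEMeasurable.aestronglyMeasurable
    apply AEMeasurable.div h.aestronglyMeasurable.aemeasurable
    fun_prop
  · rw [ae_restrict_iff' hs]
    refine Eventually.of_forall (fun x hx => ?_)
    have := hc x hx
    rw [norm_div, div_eq_mul_one_div, Real.norm_eq_abs (x - c)]
    gcongr

lemma aux_sym (ν x c : ℝ) (hx : 0 < x) (h1 : x - c ≠ 0) (h2 : x + c ≠ 0) :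
    x ^ (ν - 1) / (x - c) + x ^ (ν - 1) / (x + c) = 2 * x ^ ν / (x ^ 2 - c ^ 2) := by
  have h3 : x ^ 2 - c ^ 2 ≠ 0 := by
    rw [sq_sub_sq]; exact mul_ne_zero h2 h1
  have h4 : x ^ ν = x ^ (ν - 1) * x := by
    rw [← Real.rpow_add_one hx.ne']; congr 1; ring
  rw [h4]
  field_simp
  ring

lemma aux_reg_integral (ν : ℝ) (hν : ν ∈ Set.Ioo (0:ℝ) 1) (c : ℝ) (hc : π < |c|) :
    ∫ x in Ioo (-π) π, auxG ν x / (x - c) =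
      ∫ x in Ioc 0 π, 2 * x ^ ν / (x ^ 2 - c ^ 2) := by
  have hp := Real.pi_pos
  have hi : IntegrableOn (fun x => auxG ν x / (x - c)) (Ioo (-π) π) := by
    apply auxG_div_integrableOn ν hν c (|c| - π) (by linarith) _ measurableSet_Ioo subset_rfl
    intro x hx
    have h1 : |x| ≤ π := abs_le.mpr ⟨hx.1.le, hx.2.le⟩
    have h2 := abs_sub_abs_le_abs_sub c x
    rw [abs_sub_comm] at h2
    linarith
  have hi' : IntervalIntegrable (fun x => auxG ν x / (x - c)) volume (-π) π := by
    rw [intervalIntegrable_iff_integrableOn_Ioo_of_le (by linarith)]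
    exact hi
  have i1 : IntervalIntegrable (fun x => auxG ν x / (x - c)) volume (-π) 0 :=
    hi'.mono_set (by rw [uIcc_of_le (by linarith), uIcc_of_le (by linarith)]
                     exact Icc_subset_Icc_right hp.le)
  have i2 : IntervalIntegrable (fun x => auxG ν x / (x - c)) volume 0 π :=
    hi'.mono_set (by rw [uIcc_of_le (by linarith), uIcc_of_le (by linarith)]
                     exact Icc_subset_Icc_left (by linarith))
  have i3 : IntervalIntegrable (fun x => auxG ν (-x) / (-x - c)) volume 0 π := by
    rw [IntervalIntegrable.iff_comp_neg] at i1
    simpa using i1.symm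
  rw [← integral_Ioc_eq_integral_Ioo, ← intervalIntegral.integral_of_le (by linarith),
    ← intervalIntegral.integral_of_le hp.le, ← intervalIntegral.integral_add_adjacent_intervals i1 i2]
  have := intervalIntegral.integral_comp_neg (a := 0) (b := π) (fun x => auxG ν x / (x - c))
  rw [neg_zero] at this
  rw [← this, ← intervalIntegral.integral_add i3 i2]
  apply intervalIntegral.integral_congr_ae
  refine Eventually.of_forall (fun x hx => ?_)
  rw [uIoc_of_le hp.le] at hx
  have hx2 : |x| ≤ π := abs_le.mpr ⟨by linarith [hx.1], hx.2⟩
  have h1 : x - c ≠ 0 := by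
    intro h
    have : x = c := by linarith
    rw [this] at hx2; linarith
  have h2 : x + c ≠ 0 := by
    intro h
    have : x = -c := by linarith
    rw [this, abs_neg] at hx2; linarith
  rw [auxG_neg, auxG_pos ν x hx.1, ← aux_sym ν x c hx.1 h1 h2, add_comm]
  congr 1
  rw [show -x - c = -(x + c) by ring, neg_div_neg_eq]

/-- Auxiliary density on `(0,1)`. -/
noncomputable def auxN (ν s : ℝ) : ℝ := 2 * s ^ (-ν) / (1 - s ^ 2)

lemma aux_rpow_div_ii (r t : ℝ) (hr : -1 < r) (ht : t ∈ Ico (0:ℝ) 1) :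
    IntervalIntegrable (fun s : ℝ => 2 * s ^ r / (1 - s ^ 2)) volume 0 t := by
  have h1 := (intervalIntegral.intervalIntegrable_rpow' (a := 0) (b := t) hr).const_mul 2
  have h2 : ContinuousOn (fun s : ℝ => (1 - s ^ 2)⁻¹) (uIcc 0 t) := by
    apply ContinuousOn.inv₀ (by fun_prop)
    intro x hx
    rw [uIcc_of_le ht.1] at hx
    have : x ^ 2 < 1 := by nlinarith [hx.1, hx.2, ht.2]
    linarith
  simpa [div_eq_mul_inv] using h1.mul_continuousOn h2

lemma auxN_small (ν : ℝ) (hν : ν ∈ Set.Ioo (0:ℝ) 1) :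
    Tendsto (fun d : ℝ => ∫ s in (1 - d)..(1 / (1 + d)), auxN ν s)
      (nhdsWithin 0 (Ioi 0)) (nhds 0) := by
  have hb : ∀ᶠ d : ℝ in nhdsWithin 0 (Ioi 0),
      ‖∫ s in (1 - d)..(1 / (1 + d)), auxN ν s‖ ≤ 4 * d := by
    have h1 : ∀ᶠ d : ℝ in nhdsWithin 0 (Ioi 0), d < 1/2 :=
      (eventually_lt_nhds (by norm_num : (0:ℝ) < 1/2)).filter_mono nhdsWithin_le_nhds
    filter_upwards [h1, self_mem_nhdsWithin] with d hd hd0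
    have hd0' : (0:ℝ) < d := hd0
    have hlen : 1 / (1 + d) - (1 - d) = d ^ 2 / (1 + d) := by
      field_simp; ring
    have hle : 1 - d ≤ 1 / (1 + d) := by
      have : 0 ≤ d ^ 2 / (1 + d) := by positivity
      linarith
    have := intervalIntegral.norm_integral_le_of_norm_le_const (a := 1 - d) (b := 1 / (1 + d))
      (f := auxN ν) (C := 4 * (1 + d) / d) ?_
    · refine this.trans (le_of_eq ?_)
      rw [hlen, abs_of_nonneg (by positivity)]
      field_simp
    · intro s hs
      rw [uIoc_of_le hle] at hs
      have hs0 : 1/2 < s := by linarith [hs.1]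
      have e1 : s ^ (-ν) ≤ 2 := by
        calc s ^ (-ν) ≤ (1/2:ℝ) ^ (-ν) :=
              Real.rpow_le_rpow_of_nonpos (by norm_num) hs0.le (by linarith [hν.1])
          _ = (2:ℝ) ^ ν := by
              rw [Real.rpow_neg (by norm_num), one_div, Real.inv_rpow (by norm_num), inv_inv]
          _ ≤ (2:ℝ) ^ (1:ℝ) := Real.rpow_le_rpow_of_exponent_le (by norm_num) hν.2.le
          _ = 2 := by norm_num
      have e0 : 0 < s ^ (-ν) := Real.rpow_pos_of_pos (by linarith) _
      have e2 : d / (1 + d) ≤ 1 - s := by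
        have : d / (1 + d) = 1 - 1 / (1 + d) := by field_simp; ring
        linarith [hs.2]
      have e3 : 0 < d / (1 + d) := by positivity
      have e4 : d / (1 + d) ≤ 1 - s ^ 2 := by nlinarith
      unfold auxN
      rw [Real.norm_eq_abs, abs_of_nonneg (div_nonneg (by positivity) (by linarith))]
      calc 2 * s ^ (-ν) / (1 - s ^ 2) ≤ 2 * 2 / (d / (1 + d)) := by gcongr
        _ = 4 * (1 + d) / d := by field_simp; norm_num
  refine squeeze_zero_norm' hb ?_
  have : Tendsto (fun d : ℝ => 4 * d) (nhds 0) (nhds (4 * 0)) :=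
    (continuous_const.mul continuous_id).tendsto 0
  rw [mul_zero] at this
  exact this.mono_left nhdsWithin_le_nhds

lemma auxM_tendsto (ν : ℝ) (hν : ν ∈ Set.Ioo (0:ℝ) 1) :
    Tendsto (fun d : ℝ => ∫ s in (0:ℝ)..(1 - d), auxM ν s)
      (nhdsWithin 0 (Ioi 0)) (nhds (π * Real.tan (π * ν / 2))) := by
  rw [← auxM_integral ν hν]
  have h := intervalIntegral.continuousOn_primitive_interval' (auxM_intervalIntegrable ν hν)
    (left_mem_uIcc)
  have h1 : ContinuousWithinAt (fun b => ∫ s in (0:ℝ)..b, auxM ν s) (uIcc 0 1) 1 :=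
    h 1 right_mem_uIcc
  have h2 : Tendsto (fun d : ℝ => 1 - d) (nhdsWithin 0 (Ioi 0)) (nhdsWithin 1 (uIcc 0 1)) := by
    apply tendsto_nhdsWithin_of_tendsto_nhds_of_eventually_within
    · have : Tendsto (fun d : ℝ => 1 - d) (nhds 0) (nhds (1 - 0)) :=
        (continuous_const.sub continuous_id).tendsto 0
      rw [sub_zero] at this
      exact this.mono_left nhdsWithin_le_nhds
    · have h1 : ∀ᶠ d : ℝ in nhdsWithin 0 (Ioi 0), d < 1 :=
        (eventually_lt_nhds (by norm_num : (0:ℝ) < 1)).filter_mono nhdsWithin_le_nhds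
      filter_upwards [h1, self_mem_nhdsWithin] with d hd hd0
      have hd0' : (0:ℝ) < d := hd0
      rw [uIcc_of_le zero_le_one]
      constructor <;> linarith
  exact h1.tendsto.comp h2

/-- The tail term. -/
noncomputable def auxTail (ν u : ℝ) : ℝ :=
  ∫ r in Ioc (0:ℝ) 1, 2 * π ^ (ν + 1) * r ^ (-ν) / (π ^ 2 - r ^ 2 * u ^ 2)

lemma auxN_tail (ν u : ℝ) (hu : u ∈ Ioo 0 π) :
    u ^ (ν - 1) * ∫ s in (0:ℝ)..(u / π), auxN ν s = auxTail ν u := by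
  have hp := Real.pi_pos
  obtain ⟨hu0, hu1⟩ := hu
  have h := intervalIntegral.integral_comp_mul_left (a := 0) (b := 1) (auxN ν)
    (c := u / π) (by positivity)
  rw [mul_zero, mul_one, smul_eq_mul, eq_inv_mul_iff_mul_eq₀ (by positivity)] at h
  rw [← h, ← mul_assoc, ← intervalIntegral.integral_const_mul]
  unfold auxTail
  rw [← intervalIntegral.integral_of_le zero_le_one]
  apply intervalIntegral.integral_congr_ae
  refine Eventually.of_forall (fun r hr => ?_)
  rw [uIoc_of_le zero_le_one] at hr
  unfold auxN
  have hr0 := hr.1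
  have e1 : 0 < π ^ 2 - r ^ 2 * u ^ 2 := by
    have : r * u < π := by nlinarith [hr.2]
    have h0 : 0 < r * u := by positivity
    nlinarith
  have e2 : 1 - (u / π * r) ^ 2 = (π ^ 2 - r ^ 2 * u ^ 2) / π ^ 2 := by
    field_simp
  rw [e2, Real.mul_rpow (by positivity) hr0.le, Real.div_rpow hu0.le hp.le]
  rw [Real.rpow_sub_one hu0.ne', Real.rpow_add_one hp.ne', Real.rpow_neg hu0.le, Real.rpow_neg hp.le]
  have e5 : 0 < π ^ ν := Real.rpow_pos_of_pos hp _
  have e6 : 0 < u ^ ν := Real.rpow_pos_of_pos hu0 _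
  generalize r ^ (-ν) = X
  generalize π ^ ν = P at *
  generalize u ^ ν = U at *
  field_simp

lemma aux_left_piece (ν u t : ℝ) (hu : 0 < u) (ht : t ∈ Ioo 0 u) :
    ∫ x in (0:ℝ)..t, 2 * x ^ ν / (x ^ 2 - u ^ 2) =
      - (u ^ (ν - 1) * ∫ s in (0:ℝ)..(t / u), 2 * s ^ ν / (1 - s ^ 2)) := by
  have h := intervalIntegral.integral_comp_div (a := 0) (b := t)
    (fun s : ℝ => 2 * s ^ ν / (1 - s ^ 2)) hu.ne'
  rw [zero_div, smul_eq_mul] at h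
  have h2 : ∫ s in (0:ℝ)..(t / u), 2 * s ^ ν / (1 - s ^ 2) =
      u⁻¹ * ∫ x in (0:ℝ)..t, 2 * (x / u) ^ ν / (1 - (x / u) ^ 2) := by
    rw [h]; field_simp
  rw [h2, ← mul_assoc, ← neg_mul, ← intervalIntegral.integral_const_mul]
  apply intervalIntegral.integral_congr_ae
  refine Eventually.of_forall (fun x hx => ?_)
  rw [uIoc_of_le ht.1.le] at hx
  have e1 : x ^ 2 - u ^ 2 < 0 := by nlinarith [hx.1, hx.2, ht.2]
  have e2 : 1 - (x / u) ^ 2 = (x ^ 2 - u ^ 2) / (- u ^ 2) := by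
    field_simp; ring
  have e3 := e1.ne
  have e6 : 0 < u ^ ν := Real.rpow_pos_of_pos hu _
  rw [e2, Real.div_rpow hx.1.le hu.le, Real.rpow_sub_one hu.ne']
  field_simp

lemma aux_right_piece (ν u t : ℝ) (hu : 0 < u) (ht : t ∈ Ioo u π) :
    ∫ x in t..π, 2 * x ^ ν / (x ^ 2 - u ^ 2) =
      u ^ (ν - 1) * ∫ s in (u / π)..(u / t), auxN ν s := by
  have hp := Real.pi_pos
  have h := intervalIntegral.integral_comp_mul_deriv_of_deriv_nonpos (a := t) (b := π)
    (f := fun x => u / x) (f' := fun x => - (u / x ^ 2)) (g := auxN ν) ?_ ?_ ?_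
  · rw [intervalIntegral.integral_symm (u / t), ← h, ← intervalIntegral.integral_neg,
      ← intervalIntegral.integral_const_mul]
    apply intervalIntegral.integral_congr_ae
    refine Eventually.of_forall (fun x hx => ?_)
    rw [uIoc_of_le ht.2.le] at hx
    have hx0 : 0 < x := by linarith [hx.1, ht.1]
    have e1 : 0 < x ^ 2 - u ^ 2 := by nlinarith [hx.1, ht.1]
    simp only [Function.comp, auxN]
    have e2 : 1 - (u / x) ^ 2 = (x ^ 2 - u ^ 2) / x ^ 2 := by
      field_simp
    have e6 : 0 < u ^ ν := Real.rpow_pos_of_pos hu _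
    have e7 : 0 < x ^ ν := Real.rpow_pos_of_pos hx0 _
    rw [e2, Real.div_rpow hu.le hx0.le, Real.rpow_sub_one hu.ne', Real.rpow_neg hu.le,
      Real.rpow_neg hx0.le]
    field_simp
  · apply ContinuousOn.div (by fun_prop) (by fun_prop)
    intro x hx
    rw [uIcc_of_le ht.2.le] at hx
    linarith [hx.1, ht.1]
  · intro x hx
    rw [min_eq_left ht.2.le] at hx
    have hx0 : x ≠ 0 := by linarith [hx.1, ht.1]
    have := (hasDerivAt_const x u).div (hasDerivAt_id x) hx0
    refine this.congr_deriv ?_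
    simp [neg_div]
  · intro x hx
    have : 0 ≤ u / x ^ 2 := by positivity
    linarith

lemma aux_pv_pos (ν u : ℝ) (hν : ν ∈ Set.Ioo (0:ℝ) 1) (hu : u ∈ Ioo 0 π) :
    Tendsto (fun ε : ℝ => ∫ x in {x : ℝ | x ∈ Set.Ioo (-π) π ∧ ε < |x - u|}, auxG ν x / (x - u))
      (nhdsWithin (0:ℝ) (Set.Ioi 0))
      (nhds (π * Real.tan (π * ν / 2) * u ^ (ν - 1) - auxTail ν u)) := by
  have hp := Real.pi_pos
  have htail := auxN_tail ν u hu
  obtain ⟨hu0, hu1⟩ := hu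
  set k : ℝ → ℝ := fun x => x ^ (ν - 1) / (x + u) with hk
  have hki : IntervalIntegrable k volume 0 π := by
    have h1 := (intervalIntegral.intervalIntegrable_rpow' (a := 0) (b := π) (r := ν - 1)
      (by linarith [hν.1]))
    have h2 : ContinuousOn (fun s : ℝ => (s + u)⁻¹) (uIcc 0 π) := by
      apply ContinuousOn.inv₀ (by fun_prop)
      intro x hx
      rw [uIcc_of_le hp.le] at hx
      linarith [hx.1]
    simpa [hk, div_eq_mul_inv] using h1.mul_continuousOn h2
  -- primitive of k is continuous at u
  have hK : Tendsto (fun ε : ℝ => (∫ x in (0:ℝ)..(u + ε), k x) - ∫ x in (0:ℝ)..(u - ε), k x)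
      (nhdsWithin (0:ℝ) (Set.Ioi 0)) (nhds 0) := by
    have h := intervalIntegral.continuousOn_primitive_interval' hki left_mem_uIcc
    have hc : ContinuousAt (fun b => ∫ x in (0:ℝ)..b, k x) u := by
      apply h.continuousAt
      rw [uIcc_of_le hp.le]
      exact Icc_mem_nhds hu0 hu1
    have t1 : Tendsto (fun ε : ℝ => u + ε) (nhdsWithin (0:ℝ) (Set.Ioi 0)) (nhds u) := by
      have : Tendsto (fun ε : ℝ => u + ε) (nhds 0) (nhds (u + 0)) :=
        (continuous_const.add continuous_id).tendsto 0
      rw [add_zero] at this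
      exact this.mono_left nhdsWithin_le_nhds
    have t2 : Tendsto (fun ε : ℝ => u - ε) (nhdsWithin (0:ℝ) (Set.Ioi 0)) (nhds u) := by
      have : Tendsto (fun ε : ℝ => u - ε) (nhds 0) (nhds (u - 0)) :=
        (continuous_const.sub continuous_id).tendsto 0
      rw [sub_zero] at this
      exact this.mono_left nhdsWithin_le_nhds
    have := (hc.tendsto.comp t1).sub (hc.tendsto.comp t2)
    rw [sub_self] at this
    exact this
  have hd : Tendsto (fun ε : ℝ => ε / u) (nhdsWithin (0:ℝ) (Set.Ioi 0))
      (nhdsWithin (0:ℝ) (Set.Ioi 0)) := by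
    apply tendsto_nhdsWithin_of_tendsto_nhds_of_eventually_within
    · have : Tendsto (fun ε : ℝ => ε / u) (nhds 0) (nhds (0 / u)) :=
        (continuous_id.div_const u).tendsto 0
      rw [zero_div] at this
      exact this.mono_left nhdsWithin_le_nhds
    · filter_upwards [self_mem_nhdsWithin] with ε hε
      exact div_pos hε hu0
  have hM := (auxM_tendsto ν hν).comp hd
  have hN := (auxN_small ν hν).comp hd
  have hlim := ((((hM.add hN).const_mul (u ^ (ν - 1))).sub_const (auxTail ν u)).add hK)
  have hval : u ^ (ν - 1) * (π * Real.tan (π * ν / 2) + 0) - auxTail ν u + 0 =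
      π * Real.tan (π * ν / 2) * u ^ (ν - 1) - auxTail ν u := by ring
  rw [hval] at hlim
  refine hlim.congr' ?_
  have ev1 : ∀ᶠ ε : ℝ in nhdsWithin 0 (Ioi 0), ε < u :=
    (eventually_lt_nhds hu0).filter_mono nhdsWithin_le_nhds
  have ev2 : ∀ᶠ ε : ℝ in nhdsWithin 0 (Ioi 0), ε < π - u :=
    (eventually_lt_nhds (by linarith)).filter_mono nhdsWithin_le_nhds
  filter_upwards [ev1, ev2, self_mem_nhdsWithin] with ε hε1 hε2 hε0
  have hε : (0:ℝ) < ε := hε0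
  simp only [Function.comp]
  set f : ℝ → ℝ := fun x => auxG ν x / (x - u) with hf
  have hset : {x : ℝ | x ∈ Set.Ioo (-π) π ∧ ε < |x - u|} = Ioo (-π) (u - ε) ∪ Ioo (u + ε) π := by
    ext x
    simp only [Set.mem_ofPred_eq, Set.mem_union, Set.mem_Ioo, lt_abs]
    constructor
    · rintro ⟨⟨h1, h2⟩, h3 | h3⟩
      · right; constructor <;> linarith
      · left; constructor <;> linarith
    · rintro (⟨h1, h2⟩ | ⟨h1, h2⟩)
      · exact ⟨⟨by linarith, by linarith⟩, Or.inr (by linarith)⟩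
      · exact ⟨⟨by linarith, by linarith⟩, Or.inl (by linarith)⟩
  have hi1 : IntegrableOn f (Ioo (-π) (u - ε)) := by
    apply auxG_div_integrableOn ν hν u ε hε _ measurableSet_Ioo
      (Ioo_subset_Ioo_right (by linarith))
    intro x hx
    rw [le_abs]; right; linarith [hx.2]
  have hi2 : IntegrableOn f (Ioo (u + ε) π) := by
    apply auxG_div_integrableOn ν hν u ε hε _ measurableSet_Ioo
      (Ioo_subset_Ioo_left (by linarith))
    intro x hx
    rw [le_abs]; left; linarith [hx.1]
  have hdisj : Disjoint (Ioo (-π) (u - ε)) (Ioo (u + ε) π) := by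
    rw [Set.disjoint_left]
    intro x h1 h2
    linarith [h1.2, h2.1]
  rw [hset, setIntegral_union hdisj measurableSet_Ioo hi1 hi2]
  rw [← intervalIntegrable_iff_integrableOn_Ioo_of_le (by linarith)] at hi1 hi2
  have j1 : IntervalIntegrable f volume (-π) 0 :=
    hi1.mono_set (by rw [uIcc_of_le (by linarith), uIcc_of_le (by linarith)]
                     exact Icc_subset_Icc_right (by linarith))
  have j2 : IntervalIntegrable f volume 0 (u - ε) :=
    hi1.mono_set (by rw [uIcc_of_le (by linarith), uIcc_of_le (by linarith)]
                     exact Icc_subset_Icc_left (by linarith))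
  rw [← integral_Ioc_eq_integral_Ioo, ← integral_Ioc_eq_integral_Ioo,
    ← intervalIntegral.integral_of_le (by linarith),
    ← intervalIntegral.integral_of_le (by linarith),
    ← intervalIntegral.integral_add_adjacent_intervals j1 j2]
  have hneg : ∫ x in (-π)..0, f x = ∫ x in (0:ℝ)..π, k x := by
    have := intervalIntegral.integral_comp_neg (a := 0) (b := π) f
    rw [neg_zero] at this
    rw [← this]
    apply intervalIntegral.integral_congr_ae
    refine Eventually.of_forall (fun x hx => ?_)
    rw [uIoc_of_le hp.le] at hx
    simp only [hf, hk]
    rw [auxG_neg, auxG_pos ν x hx.1, show -x - u = -(x + u) by ring, neg_div_neg_eq]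
  have hksub : ∀ a b : ℝ, 0 ≤ a → a ≤ b → b ≤ π → IntervalIntegrable k volume a b := by
    intro a b ha hab hb
    apply hki.mono_set
    rw [uIcc_of_le hab, uIcc_of_le hp.le]
    exact Icc_subset_Icc ha hb
  have k1 := hksub 0 (u - ε) le_rfl (by linarith) (by linarith)
  have k2 := hksub (u - ε) (u + ε) (by linarith) (by linarith) (by linarith)
  have k3 := hksub (u + ε) π (by linarith) (by linarith) le_rfl
  have k4 := hksub 0 (u + ε) le_rfl (by linarith) (by linarith)
  have hksplit : ∫ x in (0:ℝ)..π, k x = (∫ x in (0:ℝ)..(u+ε), k x) + ∫ x in (u+ε)..π, k x :=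
    (intervalIntegral.integral_add_adjacent_intervals k4 k3).symm
  have hL : (∫ x in (0:ℝ)..(u - ε), f x) + ∫ x in (0:ℝ)..(u - ε), k x =
      - (u ^ (ν - 1) * ∫ s in (0:ℝ)..(1 - ε / u), 2 * s ^ ν / (1 - s ^ 2)) := by
    rw [← intervalIntegral.integral_add j2 k1, show 1 - ε / u = (u - ε) / u by field_simp,
      ← aux_left_piece ν u (u - ε) hu0 ⟨by linarith, by linarith⟩]
    apply intervalIntegral.integral_congr_ae
    refine Eventually.of_forall (fun x hx => ?_)
    rw [uIoc_of_le (by linarith)] at hx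
    simp only [hf, hk]
    rw [auxG_pos ν x hx.1, aux_sym ν x u hx.1 (by linarith [hx.2]) (by linarith [hx.1])]
  have hR : (∫ x in (u + ε)..π, f x) + ∫ x in (u + ε)..π, k x =
      u ^ (ν - 1) * ∫ s in (u / π)..(1 / (1 + ε / u)), auxN ν s := by
    rw [← intervalIntegral.integral_add hi2 k3,
      show 1 / (1 + ε / u) = u / (u + ε) by field_simp,
      ← aux_right_piece ν u (u + ε) hu0 ⟨by linarith, by linarith⟩]
    apply intervalIntegral.integral_congr_ae
    refine Eventually.of_forall (fun x hx => ?_)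
    rw [uIoc_of_le (by linarith)] at hx
    simp only [hf, hk]
    have hx0 : 0 < x := by linarith [hx.1]
    rw [auxG_pos ν x hx0, aux_sym ν x u hx0 (by linarith [hx.1]) (by linarith [hx.1])]
  have hδ0 : 0 < ε / u := by positivity
  have hδ1 : ε / u < 1 := by rw [div_lt_one hu0]; exact hε1
  have hinv : 1 / (1 + ε / u) < 1 := by
    rw [div_lt_one (by positivity)]; linarith
  have n1 : IntervalIntegrable (auxN ν) volume 0 (1 - ε / u) :=
    aux_rpow_div_ii (-ν) _ (by linarith [hν.2]) ⟨by linarith, by linarith⟩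
  have n2 : IntervalIntegrable (auxN ν) volume 0 (u / π) :=
    aux_rpow_div_ii (-ν) _ (by linarith [hν.2]) ⟨by positivity, by rw [div_lt_one hp]; exact hu1⟩
  have n3 : IntervalIntegrable (auxN ν) volume 0 (1 / (1 + ε / u)) :=
    aux_rpow_div_ii (-ν) _ (by linarith [hν.2]) ⟨by positivity, hinv⟩
  have n4 : IntervalIntegrable (fun s : ℝ => 2 * s ^ ν / (1 - s ^ 2)) volume 0 (1 - ε / u) :=
    aux_rpow_div_ii ν _ (by linarith [hν.1]) ⟨by linarith, by linarith⟩
  have s1 := intervalIntegral.integral_interval_sub_left n3 n2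
  have s2 := intervalIntegral.integral_interval_sub_left n3 n1
  have s3 : ∫ s in (0:ℝ)..(1 - ε / u), auxM ν s = (∫ s in (0:ℝ)..(1 - ε / u), auxN ν s) -
      ∫ s in (0:ℝ)..(1 - ε / u), 2 * s ^ ν / (1 - s ^ 2) := by
    rw [← intervalIntegral.integral_sub n1 n4]
    congr 1
    funext s
    unfold auxM auxN
    ring
  rw [hneg, hksplit, s3, ← s2]
  rw [← s1, mul_sub, htail] at hR
  linear_combination (-1) * hL - hR

lemma aux_pv_zero (ν u : ℝ) (hν : ν ∈ Set.Ioo (0:ℝ) 1) (hu : u ∈ Ioo (-π) π) (h0 : u ≠ 0) :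
    Tendsto (fun ε : ℝ => ∫ x in {x : ℝ | x ∈ Set.Ioo (-π) π ∧ ε < |x - u|}, auxG ν x / (x - u))
      (nhdsWithin (0:ℝ) (Set.Ioi 0))
      (nhds (π * Real.tan (π * ν / 2) * |u| ^ (ν - 1) - auxTail ν u)) := by
  rcases lt_or_gt_of_ne h0 with h | h
  · have := aux_pv_pos ν (-u) hν ⟨by linarith, by linarith [hu.1]⟩
    rw [abs_of_neg h]
    have ht : auxTail ν (-u) = auxTail ν u := by unfold auxTail; simp
    rw [ht] at this
    refine this.congr ?_
    intro ε
    have hmp : MeasurePreserving (fun x : ℝ => -x) := Measure.measurePreserving_neg volume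
    have hme : MeasurableEmbedding (fun x : ℝ => -x) := (MeasurableEquiv.neg ℝ).measurableEmbedding
    have := hmp.setIntegral_preimage_emb hme (fun x => auxG ν x / (x - u))
      {x : ℝ | x ∈ Set.Ioo (-π) π ∧ ε < |x - u|}
    rw [← this]
    have hpre : (fun x : ℝ => -x) ⁻¹' {x : ℝ | x ∈ Set.Ioo (-π) π ∧ ε < |x - u|} =
        {x : ℝ | x ∈ Set.Ioo (-π) π ∧ ε < |x - -u|} := by
      ext x
      simp only [Set.mem_preimage, Set.mem_ofPred_eq, Set.mem_Ioo]
      rw [show -x - u = -(x - -u) by ring, abs_neg]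
      constructor
      · rintro ⟨⟨a, b⟩, c⟩; exact ⟨⟨by linarith, by linarith⟩, c⟩
      · rintro ⟨⟨a, b⟩, c⟩; exact ⟨⟨by linarith, by linarith⟩, c⟩
    rw [hpre]
    congr 1
    funext x
    rw [auxG_neg, show -x - u = -(x - -u) by ring, neg_div_neg_eq]
  · rw [abs_of_pos h]
    exact aux_pv_pos ν u hν ⟨h, hu.2⟩

/-- Holomorphic extension of the `n`-th regular term. -/
noncomputable def auxGz (ν : ℝ) (n : ℤ) (z : ℂ) : ℂ :=
  if n = 0 then 0 else
    ∫ x in Ioc (0:ℝ) π, ((2 * x ^ ν : ℝ) : ℂ) /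
      (((x ^ 2 : ℝ) : ℂ) - ((1:ℝ) : ℂ) * (z - ((2 * π * (n:ℝ) : ℝ) : ℂ)) ^ 2)

/-- Holomorphic extension of the tail. -/
noncomputable def auxLz (ν : ℝ) (z : ℂ) : ℂ :=
  ∫ r in Ioc (0:ℝ) 1, ((2 * π ^ (ν + 1) * r ^ (-ν) : ℝ) : ℂ) /
      (((π ^ 2 : ℝ) : ℂ) - ((r ^ 2 : ℝ) : ℂ) * (z - 0) ^ 2)

lemma auxGz_ofReal (ν : ℝ) (n : ℤ) (hn : n ≠ 0) (u : ℝ) :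
    auxGz ν n (u : ℂ) =
      ((∫ x in Ioc 0 π, 2 * x ^ ν / (x ^ 2 - (u - 2 * π * (n:ℝ)) ^ 2) : ℝ) : ℂ) := by
  unfold auxGz
  rw [if_neg hn, ← integral_complex_ofReal]
  congr 1
  funext x
  push_cast
  simp

lemma auxLz_ofReal (ν u : ℝ) : auxLz ν (u : ℂ) = ((auxTail ν u : ℝ) : ℂ) := by
  unfold auxLz auxTail
  rw [← integral_complex_ofReal]
  congr 1
  funext x
  push_cast
  simp

lemma auxLz_diff (ν u₀ : ℝ) (hν : ν ∈ Set.Ioo (0:ℝ) 1) (hu₀ : u₀ ∈ Set.Ioo (0:ℝ) π) :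
    DifferentiableOn ℂ (auxLz ν) (Metric.ball (0:ℂ) u₀) := by
  have hw : IntegrableOn (fun r : ℝ => 2 * π ^ (ν + 1) * r ^ (-ν)) (Ioc 0 1) := by
    rw [← intervalIntegrable_iff_integrableOn_Ioc_of_le zero_le_one]
    exact (intervalIntegral.intervalIntegrable_rpow' (by linarith [hν.2])).const_mul _
  refine aux_holo (Ioc 0 1) measurableSet_Ioc _ hw (fun _ => π ^ 2) (fun r => r ^ 2)
    (by fun_prop) (by fun_prop) 0 u₀ (π ^ 2 - u₀ ^ 2) 1 ?_ ?_ ?_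
  · nlinarith [hu₀.1, hu₀.2]
  · intro x hx
    rw [abs_of_nonneg (sq_nonneg x)]
    nlinarith [hx.1, hx.2]
  · intro z hz x hx
    have hz' : ‖z‖ < u₀ := by simpa using hz
    have h1 := norm_sub_norm_le ((π ^ 2 : ℝ) : ℂ) (((x ^ 2 : ℝ) : ℂ) * (z - 0) ^ 2)
    rw [norm_mul, norm_pow, Complex.norm_real, Complex.norm_real, sub_zero,
      Real.norm_of_nonneg (sq_nonneg _), Real.norm_of_nonneg (sq_nonneg _)] at h1
    have h2 : x ^ 2 * ‖z‖ ^ 2 ≤ 1 * u₀ ^ 2 := by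
      have : x ^ 2 ≤ 1 := by nlinarith [hx.1, hx.2]
      gcongr
    rw [sub_zero]
    linarith

lemma aux_den_lower (u₀ : ℝ) (hu₀ : u₀ ∈ Set.Ioo (0:ℝ) π) (n : ℤ) (hn : n ≠ 0) (z : ℂ)
    (hz : z ∈ Metric.ball (0:ℂ) u₀) (x : ℝ) (hx : x ∈ Ioc 0 π) :
    (π - u₀) * π * (n:ℝ) ^ 2 ≤
      ‖(((x ^ 2 : ℝ) : ℂ) - ((1:ℝ) : ℂ) * (z - ((2 * π * (n:ℝ) : ℝ) : ℂ)) ^ 2)‖ := by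
  have hp := Real.pi_pos
  have hz' : ‖z‖ < u₀ := by simpa using hz
  have h1 := norm_sub_norm_le ((z - ((2 * π * (n:ℝ) : ℝ) : ℂ)) ^ 2) ((x ^ 2 : ℝ) : ℂ)
  rw [norm_pow, Complex.norm_real, Real.norm_of_nonneg (sq_nonneg _)] at h1
  rw [Complex.ofReal_one, one_mul, norm_sub_rev]
  refine le_trans ?_ h1
  have h2 := norm_sub_norm_le ((2 * π * (n:ℝ) : ℝ) : ℂ) z
  rw [Complex.norm_real, Real.norm_eq_abs, abs_mul, abs_of_pos (by positivity : 0 < 2 * π),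
    norm_sub_rev] at h2
  have hN : (1:ℝ) ≤ |(n:ℝ)| := by
    have : (1:ℤ) ≤ |n| := Int.one_le_abs hn
    exact_mod_cast this
  rw [← sq_abs (n:ℝ)]
  generalize |(n:ℝ)| = N at *
  generalize ‖z - ((2 * π * (n:ℝ) : ℝ) : ℂ)‖ = W at *
  obtain ⟨a0, a1⟩ := hu₀
  have w1 : (π - u₀) * N + π ≤ W := by nlinarith
  have w2 : 0 ≤ (π - u₀) * N := by nlinarith
  have w3 : π * N ≤ W + π := by nlinarith
  have w4 : x ^ 2 ≤ π ^ 2 := by nlinarith [hx.1, hx.2]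
  have w5 : ((π - u₀) * N) * (π * N) ≤ (W - π) * (W + π) := by
    apply mul_le_mul (by linarith) w3 (by positivity) (by linarith)
  nlinarith

lemma aux_w_int (ν : ℝ) (hν : ν ∈ Set.Ioo (0:ℝ) 1) :
    IntegrableOn (fun x : ℝ => 2 * x ^ ν) (Ioc 0 π) := by
  rw [← intervalIntegrable_iff_integrableOn_Ioc_of_le Real.pi_pos.le]
  exact (intervalIntegral.intervalIntegrable_rpow' (by linarith [hν.1])).const_mul _

lemma auxGz_diff (ν u₀ : ℝ) (hν : ν ∈ Set.Ioo (0:ℝ) 1) (hu₀ : u₀ ∈ Set.Ioo (0:ℝ) π) (n : ℤ) :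
    DifferentiableOn ℂ (auxGz ν n) (Metric.ball (0:ℂ) u₀) := by
  by_cases hn : n = 0
  · have : auxGz ν n = fun _ => 0 := by funext z; simp [auxGz, hn]
    rw [this]; exact differentiableOn_const 0
  · have : auxGz ν n = fun z => ∫ x in Ioc (0:ℝ) π, ((2 * x ^ ν : ℝ) : ℂ) /
      (((x ^ 2 : ℝ) : ℂ) - ((1:ℝ) : ℂ) * (z - ((2 * π * (n:ℝ) : ℝ) : ℂ)) ^ 2) := by
      funext z; simp only [auxGz, if_neg hn]
    rw [this]
    have hn' : (n:ℝ) ≠ 0 := by exact_mod_cast hn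
    refine aux_holo (Ioc 0 π) measurableSet_Ioc _ (aux_w_int ν hν) (fun x => x ^ 2) (fun _ => 1)
      (by fun_prop) (by fun_prop) _ u₀ ((π - u₀) * π * (n:ℝ) ^ 2) 1 ?_ ?_ ?_
    · have h1 : 0 < π - u₀ := by linarith [hu₀.2]
      have := Real.pi_pos
      positivity
    · intro x _; simp
    · intro z hz x hx
      exact aux_den_lower u₀ hu₀ n hn z hz x hx

lemma auxGz_bound (ν u₀ : ℝ) (hν : ν ∈ Set.Ioo (0:ℝ) 1) (hu₀ : u₀ ∈ Set.Ioo (0:ℝ) π) (n : ℤ)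
    (z : ℂ) (hz : z ∈ Metric.ball (0:ℂ) u₀) :
    ‖auxGz ν n z‖ ≤ (∫ x in Ioc (0:ℝ) π, 2 * x ^ ν) / ((π - u₀) * π) * (1 / (n:ℝ) ^ 2) := by
  by_cases hn : n = 0
  · simp [auxGz, hn]
  · unfold auxGz
    rw [if_neg hn]
    have hn' : (n:ℝ) ≠ 0 := by exact_mod_cast hn
    have h1 : 0 < π - u₀ := by linarith [hu₀.2]
    have hp := Real.pi_pos
    have key := norm_integral_le_of_norm_le (μ := volume.restrict (Ioc (0:ℝ) π))
      (f := fun x : ℝ => ((2 * x ^ ν : ℝ) : ℂ) /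
      (((x ^ 2 : ℝ) : ℂ) - ((1:ℝ) : ℂ) * (z - ((2 * π * (n:ℝ) : ℝ) : ℂ)) ^ 2))
      ((aux_w_int ν hν).mul_const (1 / ((π - u₀) * π * (n:ℝ) ^ 2))) ?_
    · refine key.trans (le_of_eq ?_)
      rw [integral_mul_const]
      field_simp
    · rw [ae_restrict_iff' measurableSet_Ioc]
      refine Eventually.of_forall (fun x hx => ?_)
      have h3 := aux_den_lower u₀ hu₀ n hn z hz x hx
      have h4 : 0 ≤ 2 * x ^ ν := by
        have := Real.rpow_nonneg hx.1.le ν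
        linarith
      rw [norm_div, Complex.norm_real, Real.norm_of_nonneg h4, div_eq_mul_one_div]
      gcongr

lemma aux_summable_bound (C : ℝ) : Summable (fun n : ℤ => C * (1 / (n:ℝ) ^ 2)) :=
  (Real.summable_one_div_int_pow.mpr (by norm_num)).mul_left C

/-- Congruence for principal values. -/
lemma pvInt_congr_aux (f g : ℝ → ℝ) (u : ℝ) (h : ∀ x ∈ Ioo (-π) π, f x = g x) :
    pvInt f u = pvInt g u := by
  unfold pvInt
  congr 1
  funext ε
  apply setIntegral_congr_fun
  · have h1 : MeasurableSet {x : ℝ | ε < |x - u|} := by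
      apply measurableSet_lt <;> fun_prop
    exact measurableSet_Ioo.inter h1
  · intro x hx
    exact h x hx.1

lemma aux_term (ν u₀ : ℝ) (hν : ν ∈ Set.Ioo (0:ℝ) 1) (hu₀ : u₀ ∈ Set.Ioo (0:ℝ) π) (u : ℝ)
    (hu : u ∈ Ioo (-u₀) u₀) (h0 : u ≠ 0) (n : ℤ) :
    pvInt (fun x => perExt (fun x => |x| ^ (ν - 1) * Real.sign x) x / (x - u + 2*π*(n : ℝ))) u =
      (if n = 0 then π * Real.tan (π * ν / 2) * |u| ^ (ν - 1) - auxTail ν u else 0) +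
        (auxGz ν n (u:ℂ)).re := by
  have hp := Real.pi_pos
  have hupi : u ∈ Ioo (-π) π := ⟨by linarith [hu.1, hu₀.2], by linarith [hu.2, hu₀.2]⟩
  rw [pvInt_congr_aux _ (fun x => auxG ν x / (x - (u - 2*π*(n:ℝ)))) u]
  · by_cases hn : n = 0
    · subst hn
      simp only [auxGz, if_true, Complex.zero_re, add_zero, Int.cast_zero, mul_zero, sub_zero]
      exact (aux_pv_zero ν u hν hupi h0).limUnder_eq
    · rw [if_neg hn, zero_add, auxGz_ofReal ν n hn u, Complex.ofReal_re]
      have hN : (1:ℝ) ≤ |(n:ℝ)| := by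
        have : (1:ℤ) ≤ |n| := Int.one_le_abs hn
        exact_mod_cast this
      have hc : π < |u - 2*π*(n:ℝ)| := by
        have h1 := abs_sub_abs_le_abs_sub (2*π*(n:ℝ)) u
        rw [abs_sub_comm, abs_mul, abs_of_pos (by positivity : 0 < 2 * π)] at h1
        have h2 : |u| < π := abs_lt.mpr hupi
        nlinarith
      rw [← aux_reg_integral ν hν _ hc]
      apply pvInt_regular
      apply auxG_div_integrableOn ν hν _ (|u - 2*π*(n:ℝ)| - π) (by linarith) _ measurableSet_Ioo
        subset_rfl
      intro x hx
      have h1 : |x| ≤ π := abs_le.mpr ⟨hx.1.le, hx.2.le⟩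
      have h2 := abs_sub_abs_le_abs_sub (u - 2*π*(n:ℝ)) x
      rw [abs_sub_comm _ x] at h2
      linarith
  · intro x hx
    rw [perExt_eq_aux _ x hx, show x - (u - 2*π*(n:ℝ)) = x - u + 2*π*(n:ℝ) by ring]
    rfl

/-- Lemma 2: for `ν ∈ (0,1)`, `u₀ ∈ (0,π)`, the periodic Hilbert transform of the
`2π`-periodic extension of `|u|^(ν-1) sgn(u)` equals `tan(πν/2) |u|^(ν-1)` plus a function
that is `C^∞` on `(-u₀, u₀)`. -/
theorem hilbert_abs_rpow_sgn (ν u₀ : ℝ) (hν : ν ∈ Set.Ioo (0:ℝ) 1)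
    (hu₀ : u₀ ∈ Set.Ioo (0:ℝ) π) :
    ∃ F : ℝ → ℝ, ContDiffOn ℝ (⊤ : ℕ∞) F (Set.Ioo (-u₀) u₀) ∧
      ∀ u ∈ Set.Ioo (-u₀) u₀, u ≠ 0 →
        periodicHilbert (perExt (fun x => |x| ^ (ν - 1) * Real.sign x)) u =
          Real.tan (π * ν / 2) * |u| ^ (ν - 1) + F u := by
  have hp := Real.pi_pos
  have hsumm := aux_summable_bound ((∫ x in Ioc (0:ℝ) π, 2 * x ^ ν) / ((π - u₀) * π))
  have hball : ∀ u ∈ Set.Ioo (-u₀) u₀, (u : ℂ) ∈ Metric.ball (0:ℂ) u₀ := by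
    intro u hu
    simp only [Metric.mem_ball, dist_zero_right, Complex.norm_real, Real.norm_eq_abs]
    exact abs_lt.mpr hu
  refine ⟨fun u => 1 / π * ((∑' n : ℤ, auxGz ν n (u:ℂ)) - auxLz ν (u:ℂ)).re, ?_, ?_⟩
  · have hdiff : DifferentiableOn ℂ (fun z : ℂ => (∑' n : ℤ, auxGz ν n z) - auxLz ν z)
        (Metric.ball (0:ℂ) u₀) :=
      (Complex.differentiableOn_tsum_of_summable_norm hsumm (fun n => auxGz_diff ν u₀ hν hu₀ n)
        Metric.isOpen_ball (fun n z hz => auxGz_bound ν u₀ hν hu₀ n z hz)).sub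
        (auxLz_diff ν u₀ hν hu₀)
    have hcd : ContDiffOn ℂ (⊤ : ℕ∞) (fun z : ℂ => (∑' n : ℤ, auxGz ν n z) - auxLz ν z)
        (Metric.ball (0:ℂ) u₀) := hdiff.contDiffOn Metric.isOpen_ball
    have hcdR := hcd.restrict_scalars ℝ
    have h1 : ContDiffOn ℝ (⊤ : ℕ∞) (fun u : ℝ => (u : ℂ)) (Set.Ioo (-u₀) u₀) :=
      Complex.ofRealCLM.contDiff.contDiffOn
    have h2 := hcdR.comp h1 hball
    have h3 := (Complex.reCLM.contDiff (n := (⊤ : ℕ∞))).comp_contDiffOn h2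
    exact contDiffOn_const.mul h3
  · intro u hu h0
    have hG : Summable (fun n : ℤ => auxGz ν n (u:ℂ)) :=
      Summable.of_norm_bounded hsumm (fun n => auxGz_bound ν u₀ hν hu₀ n _ (hball u hu))
    have hGr := Complex.hasSum_re hG.hasSum
    have hI := hasSum_ite_eq (0:ℤ) (π * Real.tan (π * ν / 2) * |u| ^ (ν - 1) - auxTail ν u)
    have hT := (hI.add hGr).tsum_eq
    unfold periodicHilbert
    simp_rw [aux_term ν u₀ hν hu₀ u hu h0]
    rw [hT, Complex.sub_re, auxLz_ofReal, Complex.ofReal_re]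
    field_simp
    ring
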